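/- Let (W,T) be an affine dual Coxeter system of rank n+1 arising from a crystallographic root system Φ. An element w ∈ W is a quasi-Coxeter element for (W,T) if and only if there exist roots γ_1,…,γ_{n+1} ∈ Φ and integers l_1,…,l_{n+1} ∈ ℤ such that w = s_{γ_1,l_1} ⋯ s_{γ_{n+1},l_{n+1}} and W = ⟨s_{γ_1,l_1},…,s_{γ_{n+1},l_{n+1}}⟩ (the factorization is not assumed to be reduced). -/

import Mathlib

open scoped RealInnerProductSpace

noncomputable section

variable {V : Type*} [NormedAddCommGroup V] [InnerProductSpace ℝ V]

/-- The coroot `α^∨ = 2α/(α|α)` of a vector `α`. -/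
def coroot (α : V) : V := (2 / ⟪α, α⟫) • α

/-- The affine reflection `s_{α,k} : v ↦ v - ((v|α) - k)α^∨`, as a function. -/
def sAffFun (α : V) (k : ℝ) (v : V) : V := v - (⟪v, α⟫ - k) • coroot α

theorem sAffFun_involutive (α : V) (k : ℝ) : Function.Involutive (sAffFun α k) := by
  intro v
  by_cases h : α = 0
  · simp [sAffFun, coroot, h]
  · have h2 : ⟪α, α⟫ ≠ 0 := by
      intro hz
      exact h (inner_self_eq_zero.mp hz)
    have hr : ⟪coroot α, α⟫ = 2 := by
      simp only [coroot, real_inner_smul_left]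
      field_simp
    simp only [sAffFun, inner_sub_left, real_inner_smul_left, hr]
    have : ⟪v, α⟫ - (⟪v, α⟫ - k) * 2 - k = -(⟪v, α⟫ - k) := by ring
    rw [this, neg_smul, sub_neg_eq_add, sub_add_cancel]

/-- The affine reflection `s_{α,k}` as a permutation of `V`. -/
def sAff (α : V) (k : ℝ) : Equiv.Perm V :=
  Function.Involutive.toPerm _ (sAffFun_involutive α k)

/-- The translation `Tr(x) : v ↦ v + x`, as a function. -/
def trFun (x : V) (v : V) : V := v + x

/-- The translation `Tr(x) : v ↦ v + x`, as a permutation of `V`. -/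
def trPerm (x : V) : Equiv.Perm V := Equiv.addRight x

/-- A crystallographic (reduced) root system in a Euclidean space `V`. -/
structure IsCrystRootSystem (Φ : Set V) : Prop where
  finite : Φ.Finite
  nonempty : Φ.Nonempty
  ne_zero : ∀ α ∈ Φ, α ≠ 0
  spanning : Submodule.span ℝ Φ = ⊤
  refl_mem : ∀ α ∈ Φ, ∀ β ∈ Φ, sAffFun α 0 β ∈ Φ
  reduced : ∀ α ∈ Φ, ∀ c : ℝ, c • α ∈ Φ → c = 1 ∨ c = -1
  cryst : ∀ α ∈ Φ, ∀ β ∈ Φ, ∃ n : ℤ, 2 * ⟪β, α⟫ / ⟪α, α⟫ = (n : ℝ)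

/-- The (finite) Weyl group of `Φ`, generated by the reflections `s_α`. -/
def WeylGroup (Φ : Set V) : Subgroup (Equiv.Perm V) :=
  Subgroup.closure {g | ∃ α ∈ Φ, g = sAff α 0}

/-- The affine Weyl group of `Φ`, generated by all affine reflections `s_{α,k}`, `k ∈ ℤ`. -/
def AffWeylGroup (Φ : Set V) : Subgroup (Equiv.Perm V) :=
  Subgroup.closure {g | ∃ α ∈ Φ, ∃ k : ℤ, g = sAff α k}

/-- The set of reflections of the affine Weyl group. -/
def AffReflections (Φ : Set V) : Set (Equiv.Perm V) :=
  {g | ∃ α ∈ Φ, ∃ k : ℤ, g = sAff α k}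

/-- The coweight lattice `P(Φ^∨) = {x | (x|α) ∈ ℤ for all α ∈ Φ}`. -/
def coweightLattice (Φ : Set V) : Set V :=
  {x | ∀ α ∈ Φ, ∃ n : ℤ, ⟪x, α⟫ = (n : ℝ)}

/-- `Φ` is irreducible: it admits no decomposition into two nonempty orthogonal parts. -/
def IsIrreducibleRS (Φ : Set V) : Prop :=
  ∀ Φ₁ Φ₂ : Set V, Φ₁ ∪ Φ₂ = Φ → (∀ α ∈ Φ₁, ∀ β ∈ Φ₂, ⟪α, β⟫ = 0) →
    Φ₁ = ∅ ∨ Φ₂ = ∅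

section Hurwitz

variable {G : Type*} [Group G]

/-- One Hurwitz move: replace two adjacent entries `(a, b)` by `(a * b * a⁻¹, a)`. -/
def HurwitzMove (l l' : List G) : Prop :=
  ∃ (u v : List G) (a b : G),
    l = u ++ a :: b :: v ∧ l' = u ++ (a * b * a⁻¹) :: a :: v

/-- Hurwitz equivalence: two tuples are Hurwitz equivalent iff they lie in the same
orbit of the Hurwitz action of the braid group. -/
def HurwitzEquiv (l l' : List G) : Prop := Relation.EqvGen HurwitzMove l l'

/-- The reflection length `ℓ_T(w)` of `w` with respect to a generating set `T`. -/
noncomputable def reflLength (T : Set G) (w : G) : ℕ :=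
  sInf {k | ∃ l : List G, (∀ t ∈ l, t ∈ T) ∧ l.prod = w ∧ l.length = k}

/-- `l` is a reduced `T`-factorization of `w`, i.e. an element of `Red_T(w)`. -/
def IsRedFac (T : Set G) (w : G) (l : List G) : Prop :=
  (∀ t ∈ l, t ∈ T) ∧ l.prod = w ∧ l.length = reflLength T w

end Hurwitz


/-- `w` is a quasi-Coxeter element for the affine dual Coxeter system `(W,T)` of rank `n+1`
associated to `Φ`: some reduced reflection factorization of `w` of length `n+1` generates
the whole affine Weyl group. -/
def IsQuasiCoxeterAff (Φ : Set V) (n : ℕ) (w : Equiv.Perm V) : Prop :=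
  ∃ t : Fin (n + 1) → Equiv.Perm V,
    (∀ i, t i ∈ AffReflections Φ) ∧
    (List.ofFn t).prod = w ∧
    n + 1 = reflLength (AffReflections Φ) w ∧
    Subgroup.closure (Set.range t) = AffWeylGroup Φ


theorem sAff_apply_aux (α : V) (k : ℝ) (v : V) : sAff α k v = v - (⟪v, α⟫ - k) • coroot α := rfl

theorem coroot_inner_ne_aux (α : V) (hα : α ≠ 0) (u : V) (h : ⟪coroot α, u⟫ = 0) :
    ⟪α, u⟫ = 0 := by
  have h2 : ⟪α, α⟫ ≠ 0 := fun hz => hα (inner_self_eq_zero.mp hz)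
  simp only [coroot, real_inner_smul_left] at h
  rcases mul_eq_zero.mp h with h | h
  · exact absurd h (div_ne_zero two_ne_zero h2)
  · exact h

/-- The displacement of a linear functional under a product of reflections is an affine
functional in the span of the affine roots. -/
theorem displacement_aux (m : ℕ) (γ : Fin m → V) (l : Fin m → ℝ) (u : V) :
    ∃ p ∈ Submodule.span ℝ (Set.range fun i => (γ i, l i)), ∀ x : V,
      ⟪(List.ofFn fun i => sAff (γ i) (l i)).prod x, u⟫ - ⟪x, u⟫ = ⟪x, p.1⟫ - p.2 := by
  induction m with
  | zero => exact ⟨0, Submodule.zero_mem _, fun x => by simp⟩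
  | succ m ih =>
    obtain ⟨p, hp, h⟩ := ih (fun i => γ i.castSucc) (fun i => l i.castSucc)
    have hp' : p ∈ Submodule.span ℝ (Set.range fun i => (γ i, l i)) := by
      refine Submodule.span_mono ?_ hp
      rintro _ ⟨i, rfl⟩
      exact ⟨i.castSucc, rfl⟩
    set g := γ (Fin.last m)
    set k := l (Fin.last m)
    refine ⟨p - (⟪coroot g, u⟫ + ⟪coroot g, p.1⟫) • (g, k), Submodule.sub_mem _ hp'
      (Submodule.smul_mem _ _ (Submodule.subset_span ⟨Fin.last m, rfl⟩)), fun x => ?_⟩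
    have h1 := h (sAff g k x)
    rw [List.ofFn_succ']
    simp only [List.concat_eq_append, List.prod_append, List.prod_singleton, Equiv.Perm.mul_apply]
    rw [sub_eq_iff_eq_add] at h1
    change ⟪(List.ofFn fun i : Fin m => sAff (γ i.castSucc) (l i.castSucc)).prod (sAff g k x), u⟫
      - _ = _
    rw [h1, sAff_apply_aux]
    simp only [inner_sub_left, real_inner_smul_left, Prod.fst_sub, Prod.snd_sub, Prod.smul_mk,
      inner_sub_right, real_inner_smul_right, smul_eq_mul]
    ring

theorem affine_ext_aux (p q : V × ℝ) (h : ∀ x : V, ⟪x, p.1⟫ - p.2 = ⟪x, q.1⟫ - q.2) : p = q := by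
  have h0 := h 0
  simp only [inner_zero_left, zero_sub, neg_inj] at h0
  refine Prod.ext ?_ h0
  refine ext_inner_left ℝ fun x => ?_
  have := h x
  rw [h0] at this
  linarith

/-- A linear functional invariant under a product of reflections in linearly independent affine
roots is orthogonal to all the roots. -/
theorem fixed_aux (m : ℕ) (γ : Fin m → V) (l : Fin m → ℝ) (hγ : ∀ i, γ i ≠ 0)
    (hli : LinearIndependent ℝ fun i => (γ i, l i)) (u : V)
    (h : ∀ x : V, ⟪(List.ofFn fun i => sAff (γ i) (l i)).prod x, u⟫ = ⟪x, u⟫) :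
    ∀ i, ⟪γ i, u⟫ = 0 := by
  induction m with
  | zero => exact fun i => i.elim0
  | succ m ih =>
    rw [linearIndependent_finSucc'] at hli
    obtain ⟨hli1, hli2⟩ := hli
    set g := γ (Fin.last m) with hg
    set k := l (Fin.last m) with hk
    have h' : ∀ y : V, ⟪(List.ofFn fun i : Fin m => sAff (γ i.castSucc) (l i.castSucc)).prod y, u⟫
        = ⟪y, u⟫ - (⟪y, g⟫ - k) * ⟪coroot g, u⟫ := by
      intro y
      have h1 := h (sAff g k y)
      rw [List.ofFn_succ'] at h1
      simp only [List.concat_eq_append, List.prod_append, List.prod_singleton,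
        Equiv.Perm.mul_apply] at h1
      rw [← hg, ← hk] at h1
      have h2 : sAff g k (sAff g k y) = y := sAffFun_involutive g k y
      rw [h2] at h1
      refine h1.trans ?_
      rw [sAff_apply_aux, inner_sub_left, real_inner_smul_left]
    obtain ⟨p, hp, hpx⟩ := displacement_aux m (fun i => γ i.castSucc) (fun i => l i.castSucc) u
    have hpe : p = (-⟪coroot g, u⟫) • (g, k) := by
      apply affine_ext_aux
      intro x
      rw [← hpx, h']
      simp only [Prod.smul_mk, real_inner_smul_right, smul_eq_mul]
      ring
    have hc : ⟪coroot g, u⟫ = 0 := by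
      by_contra hc
      apply hli2
      rw [hpe] at hp
      exact (Submodule.smul_mem_iff _ (neg_ne_zero.mpr hc)).mp hp
    have hi := ih (fun i => γ i.castSucc) (fun i => l i.castSucc) (fun i => hγ _) hli1
      (fun x => by rw [h', hc]; ring)
    intro i
    induction i using Fin.lastCases with
    | last => exact coroot_inner_ne_aux _ (hγ _) _ hc
    | cast i => exact hi i

/-- Linear part of a product of reflections has determinant given by the parity. -/
theorem linpart_aux [FiniteDimensional ℝ V] (Φ : Set V) (h0 : ∀ α ∈ Φ, α ≠ 0)
    (L : List (Equiv.Perm V)) (hL : ∀ t ∈ L, t ∈ AffReflections Φ) :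
    ∃ D : V →ₗ[ℝ] V, LinearMap.det D = (-1) ^ L.length ∧
      ∀ x, L.prod x = D x + L.prod 0 := by
  induction L with
  | nil => exact ⟨LinearMap.id, by simp, by simp⟩
  | cons t L ih =>
    obtain ⟨D, hD, hx⟩ := ih (fun s hs => hL s (List.mem_cons_of_mem _ hs))
    obtain ⟨α, hα, k, rfl⟩ := hL t List.mem_cons_self
    refine ⟨(LinearMap.transvection (innerₛₗ ℝ α) (-coroot α)).comp D, ?_, fun x => ?_⟩
    · rw [LinearMap.det_comp, hD, LinearMap.transvection.det]
      have h2 : ⟪α, α⟫ ≠ 0 := fun hz => h0 α hα (inner_self_eq_zero.mp hz)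
      have : ⟪α, coroot α⟫ = 2 := by
        simp only [coroot, real_inner_smul_right]
        field_simp
      simp only [map_neg, innerₛₗ_apply_apply, this, List.length_cons, pow_succ]
      ring
    · simp only [List.prod_cons, Equiv.Perm.mul_apply, sAff_apply_aux]
      rw [hx x]
      simp only [LinearMap.comp_apply, LinearMap.transvection.apply, innerₛₗ_apply_apply,
        inner_add_right, real_inner_comm α]
      module

theorem invariant_aux (u : V) (L : List (Equiv.Perm V))
    (A : List V) (h : List.Forall₂ (fun t α => ∃ k : ℤ, t = sAff α k) L A)
    (hu : ∀ α ∈ A, ⟪α, u⟫ = 0) (x : V) : ⟪L.prod x, u⟫ = ⟪x, u⟫ := by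
  induction h with
  | nil => simp
  | @cons t α L A ht _ ih =>
    obtain ⟨k, rfl⟩ := ht
    have := ih (fun β hβ => hu β (List.mem_cons_of_mem _ hβ))
    simp only [List.prod_cons, Equiv.Perm.mul_apply, sAff_apply_aux]
    rw [inner_sub_left, this, coroot, real_inner_smul_left, real_inner_smul_left,
      hu α List.mem_cons_self]
    ring

theorem exists_roots_aux (Φ : Set V) (L : List (Equiv.Perm V))
    (hL : ∀ t ∈ L, t ∈ AffReflections Φ) :
    ∃ A : List V, List.Forall₂ (fun t α => ∃ k : ℤ, t = sAff α k) L A := by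
  induction L with
  | nil => exact ⟨[], .nil⟩
  | cons t L ih =>
    obtain ⟨A, hA⟩ := ih (fun s hs => hL s (List.mem_cons_of_mem _ hs))
    obtain ⟨α, -, k, hk⟩ := hL t List.mem_cons_self
    exact ⟨α :: A, .cons ⟨k, hk⟩ hA⟩

theorem exists_orth_aux [FiniteDimensional ℝ V] (A : List V)
    (h : A.length < Module.finrank ℝ V) : ∃ u : V, u ≠ 0 ∧ ∀ α ∈ A, ⟪α, u⟫ = 0 := by
  classical
  have h1 : Submodule.span ℝ (A.toFinset : Set V) ≠ ⊤ := by
    intro he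
    have := finrank_span_finset_le_card (R := ℝ) A.toFinset
    rw [Set.finrank, he, finrank_top] at this
    have := A.toFinset_card_le
    omega
  have h2 : (Submodule.span ℝ (A.toFinset : Set V))ᗮ ≠ ⊥ := fun hb =>
    h1 (Submodule.orthogonal_eq_bot_iff.mp hb)
  obtain ⟨u, hu, hne⟩ := Submodule.exists_mem_ne_zero_of_ne_bot h2
  exact ⟨u, hne, fun α hα => (Submodule.mem_orthogonal _ _).mp hu α
    (Submodule.subset_span (by simpa using hα))⟩

theorem orth_aux (Φ : Set V) (hΦ : IsCrystRootSystem Φ) {m : ℕ}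
    (γ : Fin m → V) (l : Fin m → ℤ)
    (hgen : Subgroup.closure (Set.range fun i => sAff (γ i) (l i : ℝ)) = AffWeylGroup Φ)
    (u : V) (hu : ∀ i, ⟪γ i, u⟫ = 0) : u = 0 := by
  have key : ∀ g ∈ Subgroup.closure (Set.range fun i => sAff (γ i) (l i : ℝ)),
      ∀ x : V, ⟪g x, u⟫ = ⟪x, u⟫ := by
    intro g hg
    induction hg using Subgroup.closure_induction with
    | mem g hg =>
      obtain ⟨i, rfl⟩ := hg
      intro x
      simp only [sAff_apply_aux]
      rw [inner_sub_left, coroot, real_inner_smul_left, real_inner_smul_left, hu]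
      ring
    | one => simp
    | mul a b _ _ ha hb => intro x; rw [Equiv.Perm.mul_apply, ha, hb]
    | inv a _ ha => intro x; have h := ha (a⁻¹ x); rw [show a (a⁻¹ x) = x from a.apply_symm_apply x] at h; exact h.symm
  rw [hgen] at key
  have h1 : ∀ α ∈ Φ, ⟪α, u⟫ = 0 := by
    intro α hα
    have h2 := key (sAff α 0) (Subgroup.subset_closure ⟨α, hα, 0, by simp⟩) α
    rw [sAff_apply_aux, inner_sub_left, real_inner_smul_left, sub_zero] at h2
    have h3 : ⟪α, α⟫ ≠ 0 := fun hz => hΦ.ne_zero α hα (inner_self_eq_zero.mp hz)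
    refine coroot_inner_ne_aux α (hΦ.ne_zero α hα) u ?_
    have h4 : ⟪α, α⟫ * ⟪coroot α, u⟫ = 0 := by linarith
    exact (mul_eq_zero.mp h4).resolve_left h3
  have h5 : u ∈ (Submodule.span ℝ Φ)ᗮ := by
    rw [Submodule.mem_orthogonal]
    intro v hv
    induction hv using Submodule.span_induction with
    | mem v hv => exact h1 v hv
    | zero => simp
    | add a b _ _ ha hb => rw [inner_add_left, ha, hb, add_zero]
    | smul c a _ ha => rw [real_inner_smul_left, ha, mul_zero]
  rw [hΦ.spanning, Submodule.top_orthogonal_eq_bot] at h5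
  exact (Submodule.mem_bot ℝ).mp h5

theorem no_fix_aux (Φ : Set V) (hΦ : IsCrystRootSystem Φ) {m : ℕ}
    (γ : Fin m → V) (l : Fin m → ℤ)
    (hgen : Subgroup.closure (Set.range fun i => sAff (γ i) (l i : ℝ)) = AffWeylGroup Φ)
    (v : V) (hv : ∀ i, ⟪v, γ i⟫ = l i) : False := by
  have key : ∀ g ∈ Subgroup.closure (Set.range fun i => sAff (γ i) (l i : ℝ)), g v = v := by
    intro g hg
    induction hg using Subgroup.closure_induction with
    | mem g hg =>
      obtain ⟨i, rfl⟩ := hg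
      simp [sAff_apply_aux, hv]
    | one => simp
    | mul a b _ _ ha hb => rw [Equiv.Perm.mul_apply, hb, ha]
    | inv a _ ha => rw [Equiv.Perm.inv_eq_iff_eq, ha]
  rw [hgen] at key
  obtain ⟨α, hα⟩ := hΦ.nonempty
  have h0 := key (sAff α 0) (Subgroup.subset_closure ⟨α, hα, 0, by simp⟩)
  have h1 := key (sAff α 1) (Subgroup.subset_closure ⟨α, hα, 1, by simp⟩)
  rw [sAff_apply_aux] at h0 h1
  have h3 : coroot α = 0 := by
    have h4 := h0.trans h1.symm
    rw [sub_right_inj, sub_smul, sub_smul, sub_right_inj] at h4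
    simpa using h4.symm
  have h5 : ⟪α, α⟫ ≠ 0 := fun hz => hΦ.ne_zero α hα (inner_self_eq_zero.mp hz)
  rw [coroot, smul_eq_zero] at h3
  exact h3.elim (div_ne_zero two_ne_zero h5) (hΦ.ne_zero α hα)

theorem li_aux [FiniteDimensional ℝ V] (Φ : Set V) (hΦ : IsCrystRootSystem Φ)
    (n : ℕ) (hrank : Module.finrank ℝ V = n) (γ : Fin (n + 1) → V) (l : Fin (n + 1) → ℤ)
    (hgen : Subgroup.closure (Set.range fun i => sAff (γ i) (l i : ℝ)) = AffWeylGroup Φ) :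
    LinearIndependent ℝ fun i => (γ i, (l i : ℝ)) := by
  apply linearIndependent_of_top_le_span_of_card_eq_finrank
  · by_contra hlt
    obtain ⟨f, hf0, hf⟩ := Submodule.exists_le_ker_of_lt_top _
      (lt_top_iff_ne_top.mpr fun h => hlt h.ge)
    set f1 : V →ₗ[ℝ] ℝ := f.comp (LinearMap.inl ℝ V ℝ) with hf1
    set v : V := (InnerProductSpace.toDual ℝ V).symm (LinearMap.toContinuousLinearMap f1)
    have hv : ∀ x, ⟪v, x⟫ = f (x, 0) := by
      intro x
      rw [InnerProductSpace.toDual_symm_apply]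
      simp [hf1]
    have hfx : ∀ x c, f (x, c) = ⟪v, x⟫ + c * f (0, 1) := by
      intro x c
      rw [hv, ← smul_eq_mul, ← map_smul, ← map_add]
      simp
    have hi : ∀ i, ⟪v, γ i⟫ + l i * f (0, 1) = 0 := by
      intro i
      rw [← hfx]
      exact hf (Submodule.subset_span ⟨i, rfl⟩)
    by_cases ha : f (0, 1) = 0
    · have hv0 : v = 0 := by
        apply orth_aux Φ hΦ γ l hgen
        intro i
        have := hi i
        rw [ha, mul_zero, add_zero] at this
        rw [real_inner_comm, this]
      apply hf0
      refine LinearMap.ext fun p => ?_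
      obtain ⟨x, c⟩ := p
      rw [hfx, ha, hv0]
      simp
    · apply no_fix_aux Φ hΦ γ l hgen ((-(f (0, 1))⁻¹) • v)
      intro i
      have h1 := hi i
      rw [real_inner_smul_left, show ⟪v, γ i⟫ = - (l i * f (0, 1)) by linarith]
      field_simp
  · simp [hrank]

theorem statement_10 (Φ : Set V) (hΦ : IsCrystRootSystem Φ)
    (n : ℕ) (hrank : Module.finrank ℝ V = n)
    (w : Equiv.Perm V) (hw : w ∈ AffWeylGroup Φ) :
    IsQuasiCoxeterAff Φ n w ↔
      ∃ (γ : Fin (n + 1) → V) (l : Fin (n + 1) → ℤ),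
        (∀ i, γ i ∈ Φ) ∧
        (List.ofFn fun i => sAff (γ i) (l i : ℝ)).prod = w ∧
        Subgroup.closure (Set.range fun i => sAff (γ i) (l i : ℝ)) = AffWeylGroup Φ := by
  have hfd : FiniteDimensional ℝ V :=
    ⟨⟨hΦ.finite.toFinset, by rw [Set.Finite.coe_toFinset]; exact hΦ.spanning⟩⟩
  constructor
  · rintro ⟨t, ht, hprod, -, hgen⟩
    choose γ hγ l hl using ht
    obtain rfl : t = fun i => sAff (γ i) (l i : ℝ) := funext hl
    exact ⟨γ, l, hγ, hprod, hgen⟩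
  · rintro ⟨γ, l, hγ, hprod, hgen⟩
    have hmem : ∀ i, sAff (γ i) (l i : ℝ) ∈ AffReflections Φ := fun i => ⟨γ i, hγ i, l i, rfl⟩
    refine ⟨fun i => sAff (γ i) (l i : ℝ), hmem, hprod, ?_, hgen⟩
    have hL0 : ∀ t ∈ List.ofFn fun i => sAff (γ i) (l i : ℝ), t ∈ AffReflections Φ := by
      intro t ht
      obtain ⟨i, rfl⟩ := (List.mem_ofFn' _ _).mp ht
      exact hmem i
    have hin : n + 1 ∈ {k | ∃ L : List (Equiv.Perm V), (∀ t ∈ L, t ∈ AffReflections Φ) ∧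
        L.prod = w ∧ L.length = k} := ⟨_, hL0, hprod, by simp⟩
    refine le_antisymm (le_csInf ⟨_, hin⟩ ?_) (Nat.sInf_le hin)
    rintro k ⟨L, hL, hLw, rfl⟩
    have hge : n ≤ L.length := by
      by_contra hlt
      obtain ⟨A, hA⟩ := exists_roots_aux Φ L hL
      obtain ⟨u, hu0, hu⟩ := exists_orth_aux A (by rw [← hA.length_eq, hrank]; omega)
      apply hu0
      apply orth_aux Φ hΦ γ l hgen
      refine fixed_aux (n + 1) γ (fun i => (l i : ℝ)) (fun i => hΦ.ne_zero _ (hγ i))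
        (li_aux Φ hΦ n hrank γ l hgen) u fun x => ?_
      rw [hprod, ← hLw]
      exact invariant_aux u L A hA hu x
    have hne : L.length ≠ n := by
      intro he
      obtain ⟨D, hD, hDx⟩ := linpart_aux Φ hΦ.ne_zero L hL
      obtain ⟨E, hE, hEx⟩ := linpart_aux Φ hΦ.ne_zero _ hL0
      have hDE : D = E := by
        refine LinearMap.ext fun x => ?_
        have h1 := hDx x
        have h2 := hEx x
        rw [hLw] at h1
        rw [hprod] at h2
        exact add_right_cancel (h1.symm.trans h2)
      rw [hDE, hE, List.length_ofFn, he, pow_succ] at hD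
      have : ((-1 : ℝ)) ^ n ≠ 0 := pow_ne_zero _ (by norm_num)
      apply this
      linarith
    omega



end
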